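/- Let i and j be distinct positive integers. Let H and H' be complex Hilbert spaces, let (s_n)_{n ≥ 1} and (s'_n)_{n ≥ 1} be families of bounded operators on H and H' respectively with s_m^* s_n = δ_{mn}·1 and s'_m{}^* s'_n = δ_{mn}·1 for all m, n ≥ 1, and let Ω ∈ H and Ω' ∈ H' be unit vectors, cyclic for (s_n) and (s'_n) respectively, with s_i Ω = Ω and s'_j Ω' = Ω'. Then there is no unitary operator U : H → H' with U s_n = s'_n U for every n ≥ 1. (The classes P∞(i) and P∞(j) are not unitarily equivalent for i ≠ j.) -/

import Mathlib

/-!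
A fixed vector `Ω` of `s j` is sent by each `s n†` to itself or to `0`, so the monomials
`s n₁ ⋯ s nₖ Ω` span an invariant subspace, which is dense when `Ω` is cyclic. If `s i Φ = Φ`, then
moving `s i` across the inner product peels the letters `i` off a monomial one by one, until a
letter other than `i` makes `⟪Φ, s n₁ ⋯ s nₖ Ω⟫` vanish; for `i ≠ j` such a letter always turns up,
because `Ω = s j Ω`. Hence `Φ = 0`, whereas a unitary equivalence would carry the fixed unit vector
of `s i` to a nonzero fixed vector of `s' i`.
-/

section CuntzFamily

open scoped InnerProduct InnerProductSpace

variable {𝕜 ι H : Type*} [RCLike 𝕜] [NormedAddCommGroup H] [InnerProductSpace 𝕜 H]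

/-- The span of the monomials `s n₁ ⋯ s nₖ Ω`, one for each finite word `[n₁, …, nₖ]`. -/
def monomialSpan (s : ι → H →L[𝕜] H) (Ω : H) : Submodule 𝕜 H :=
  Submodule.span 𝕜 (Set.range fun w : List ι => (w.map s).prod Ω)

theorem monomial_mem_monomialSpan (s : ι → H →L[𝕜] H) (Ω : H) (w : List ι) :
    (w.map s).prod Ω ∈ monomialSpan s Ω :=
  Submodule.subset_span ⟨w, rfl⟩

theorem mem_monomialSpan_self (s : ι → H →L[𝕜] H) (Ω : H) : Ω ∈ monomialSpan s Ω :=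
  monomial_mem_monomialSpan s Ω []

theorem mapsTo_monomialSpan (s : ι → H →L[𝕜] H) (Ω : H) (n : ι) :
    Set.MapsTo (s n) (monomialSpan s Ω) (monomialSpan s Ω) := by
  suffices monomialSpan s Ω ≤ (monomialSpan s Ω).comap (s n).toLinearMap from this
  refine Submodule.span_le.2 ?_
  rintro _ ⟨w, rfl⟩
  exact monomial_mem_monomialSpan s Ω (n :: w)

variable [CompleteSpace H]

/-- Isometries with pairwise orthogonal ranges, indexed by an arbitrary type: the Cuntz relations,
as satisfied by the generators in a representation of the Cuntz algebra. For infinite `ι` these are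
all the relations, so nothing is required of the closed sum of the ranges. -/
structure IsCuntzFamily (s : ι → H →L[𝕜] H) : Prop where
  adjoint_mul_self (n : ι) : (s n)† * s n = 1
  adjoint_mul_of_ne {m n : ι} (hmn : m ≠ n) : (s m)† * s n = 0

/-- `Ω` is cyclic for `s`: no proper closed subspace containing `Ω` is invariant under every `s n`
and its adjoint. -/
def IsCyclicVector (s : ι → H →L[𝕜] H) (Ω : H) : Prop :=
  ∀ K : Submodule 𝕜 H, IsClosed (K : Set H) → Ω ∈ K →
    (∀ n, Set.MapsTo (s n) K K) → (∀ n, Set.MapsTo ((s n)†) K K) → K = ⊤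

namespace IsCuntzFamily

variable {s : ι → H →L[𝕜] H} {i j : ι} {Φ Ω : H}

theorem adjoint_apply_self (hs : IsCuntzFamily s) (n : ι) (v : H) : ((s n)†) (s n v) = v :=
  DFunLike.congr_fun (hs.adjoint_mul_self n) v

theorem adjoint_apply_of_ne (hs : IsCuntzFamily s) {m n : ι} (hmn : m ≠ n) (v : H) :
    ((s m)†) (s n v) = 0 :=
  DFunLike.congr_fun (hs.adjoint_mul_of_ne hmn) v

theorem adjoint_apply_mem (hs : IsCuntzFamily s) {K : Submodule 𝕜 H} {v : H} (hv : v ∈ K)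
    (m n : ι) : ((s m)†) (s n v) ∈ K := by
  obtain rfl | hmn := eq_or_ne m n
  · rwa [hs.adjoint_apply_self]
  · rw [hs.adjoint_apply_of_ne hmn]
    exact K.zero_mem

theorem mapsTo_adjoint_monomialSpan (hs : IsCuntzFamily s) (hΩ : s j Ω = Ω) (n : ι) :
    Set.MapsTo ((s n)†) (monomialSpan s Ω) (monomialSpan s Ω) := by
  suffices monomialSpan s Ω ≤ (monomialSpan s Ω).comap ((s n)†).toLinearMap from this
  refine Submodule.span_le.2 ?_
  rintro _ ⟨_ | ⟨m, w⟩, rfl⟩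
  · have hmem := hs.adjoint_apply_mem (mem_monomialSpan_self s Ω) n j
    rwa [hΩ] at hmem
  · exact hs.adjoint_apply_mem (monomial_mem_monomialSpan s Ω w) n m

theorem topologicalClosure_monomialSpan (hs : IsCuntzFamily s) (hcyc : IsCyclicVector s Ω)
    (hΩ : s j Ω = Ω) : (monomialSpan s Ω).topologicalClosure = ⊤ :=
  hcyc _ (Submodule.isClosed_topologicalClosure _)
    (Submodule.le_topologicalClosure _ (mem_monomialSpan_self s Ω))
    (fun n => (mapsTo_monomialSpan s Ω n).closure (s n).continuous)
    (fun n => (hs.mapsTo_adjoint_monomialSpan hΩ n).closure ((s n)†).continuous)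

theorem inner_apply_self (hs : IsCuntzFamily s) (hΦ : s i Φ = Φ) (v : H) :
    ⟪Φ, s i v⟫_𝕜 = ⟪Φ, v⟫_𝕜 := by
  nth_rw 1 [← hΦ]
  rw [← ContinuousLinearMap.adjoint_inner_right, hs.adjoint_apply_self]

theorem inner_apply_of_ne (hs : IsCuntzFamily s) (hΦ : s i Φ = Φ) {n : ι} (hin : i ≠ n) (v : H) :
    ⟪Φ, s n v⟫_𝕜 = 0 := by
  rw [← hΦ, ← ContinuousLinearMap.adjoint_inner_right, hs.adjoint_apply_of_ne hin,
    inner_zero_right]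

theorem inner_monomial_eq_zero (hs : IsCuntzFamily s) (hij : i ≠ j) (hΦ : s i Φ = Φ)
    (hΩ : s j Ω = Ω) (w : List ι) : ⟪Φ, (w.map s).prod Ω⟫_𝕜 = 0 := by
  induction w with
  | nil =>
    rw [List.map_nil, List.prod_nil, one_apply_eq_self, ← hΩ]
    exact hs.inner_apply_of_ne hΦ hij Ω
  | cons n w ih =>
    rw [List.map_cons, List.prod_cons, mul_apply_eq_comp]
    obtain rfl | hin := eq_or_ne i n
    · rw [hs.inner_apply_self hΦ, ih]
    · exact hs.inner_apply_of_ne hΦ hin _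

theorem eq_zero_of_apply_eq_self (hs : IsCuntzFamily s) (hcyc : IsCyclicVector s Ω)
    (hΩ : s j Ω = Ω) (hij : i ≠ j) (hΦ : s i Φ = Φ) : Φ = 0 := by
  have hdense : (monomialSpan s Ω)ᗮ = ⊥ :=
    Submodule.topologicalClosure_eq_top_iff.1 (hs.topologicalClosure_monomialSpan hcyc hΩ)
  have horth : monomialSpan s Ω ≤ (𝕜 ∙ Φ)ᗮ := by
    refine Submodule.span_le.2 ?_
    rintro _ ⟨w, rfl⟩
    exact Submodule.mem_orthogonal_singleton_iff_inner_right.2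
      (hs.inner_monomial_eq_zero hij hΦ hΩ w)
  have hmem : Φ ∈ (monomialSpan s Ω)ᗮ :=
    Submodule.orthogonal_le horth
      (Submodule.le_orthogonal_orthogonal _ (Submodule.mem_span_singleton_self Φ))
  rwa [hdense, Submodule.mem_bot] at hmem

end IsCuntzFamily

theorem P_infty_i_not_equivalent_P_infty_j_general {E : Type*} [AddCommGroup E] [Module 𝕜 E]
    {s : ι → H →L[𝕜] H} (hs : IsCuntzFamily s) {i j : ι} (hij : i ≠ j)
    {Ω : H} (hcyc : IsCyclicVector s Ω) (hΩ : s j Ω = Ω)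
    {T : E →ₗ[𝕜] E} {Φ : E} (hΦ₀ : Φ ≠ 0) (hΦ : T Φ = Φ) :
    ¬ ∃ U : E →ₗ[𝕜] H, Function.Injective U ∧ ∀ v, U (T v) = s i (U v) := by
  rintro ⟨U, hU, hUT⟩
  have hfixed : s i (U Φ) = U Φ := by rw [← hUT, hΦ]
  have hzero : U Φ = 0 := hs.eq_zero_of_apply_eq_self hcyc hΩ hij hfixed
  exact hΦ₀ (hU (hzero.trans U.map_zero.symm))

end CuntzFamily

theorem P_infty_i_not_equivalent_P_infty_j
    {H : Type*} [NormedAddCommGroup H] [InnerProductSpace ℂ H] [CompleteSpace H]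
    {H' : Type*} [NormedAddCommGroup H'] [InnerProductSpace ℂ H'] [CompleteSpace H']
    (i j : ℕ) (hi : 1 ≤ i) (hj : 1 ≤ j) (hij : i ≠ j)
    (s : ℕ → H →L[ℂ] H) (s' : ℕ → H' →L[ℂ] H')
    (hCuntz : ∀ m n, 1 ≤ m → 1 ≤ n →
      (ContinuousLinearMap.adjoint (s m)).comp (s n) =
        if m = n then (1 : H →L[ℂ] H) else 0)
    (hCuntz' : ∀ m n, 1 ≤ m → 1 ≤ n →
      (ContinuousLinearMap.adjoint (s' m)).comp (s' n) =
        if m = n then (1 : H' →L[ℂ] H') else 0)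
    (Ω : H) (hΩnorm : ‖Ω‖ = 1)
    (Ω' : H') (hΩ'norm : ‖Ω'‖ = 1)
    (hcyc : ∀ K : Submodule ℂ H, IsClosed (K : Set H) → Ω ∈ K →
      (∀ n, 1 ≤ n → ∀ v ∈ K, s n v ∈ K) →
      (∀ n, 1 ≤ n → ∀ v ∈ K, ContinuousLinearMap.adjoint (s n) v ∈ K) → K = ⊤)
    (hcyc' : ∀ K : Submodule ℂ H', IsClosed (K : Set H') → Ω' ∈ K →
      (∀ n, 1 ≤ n → ∀ v ∈ K, s' n v ∈ K) →
      (∀ n, 1 ≤ n → ∀ v ∈ K, ContinuousLinearMap.adjoint (s' n) v ∈ K) → K = ⊤)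
    (hfix : s i Ω = Ω) (hfix' : s' j Ω' = Ω') :
    ¬ ∃ U : H ≃ₗᵢ[ℂ] H', ∀ n, 1 ≤ n → ∀ v : H, U (s n v) = s' n (U v) := by
  rintro ⟨U, hU⟩
  have hs' : IsCuntzFamily fun n : ℕ+ => s' n :=
    { adjoint_mul_self n := (hCuntz' n n n.pos n.pos).trans (if_pos rfl)
      adjoint_mul_of_ne {m n} hmn :=
        (hCuntz' m n m.pos n.pos).trans (if_neg (PNat.coe_inj.not.2 hmn)) }
  have hΩ' : IsCyclicVector (fun n : ℕ+ => s' n) Ω' := fun K hK hΩK hinv hinv' =>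
    hcyc' K hK hΩK (fun n hn _ hv => hinv ⟨n, hn⟩ hv) (fun n hn _ hv => hinv' ⟨n, hn⟩ hv)
  have hΩ₀ : Ω ≠ 0 := norm_ne_zero_iff.1 (hΩnorm ▸ one_ne_zero)
  exact P_infty_i_not_equivalent_P_infty_j_general hs' (i := ⟨i, hi⟩) (j := ⟨j, hj⟩)
    (Subtype.coe_ne_coe.1 hij) hΩ' hfix' (T := (s i).toLinearMap) hΩ₀ hfix
    ⟨U.toLinearEquiv.toLinearMap, U.injective, hU i hi⟩
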